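/- arXiv:1902.07657 — 10 statements merged into one kernel-verified Lean document; each statement's English description precedes it below -/
import Mathlib

section
/- Hairy Ball Theorem (Poincaré–Brouwer): If k ≥ 2 is even, then for every continuous tangent vector field f : S^k → ℝ^{k+1} (i.e., f continuous with ⟨f(x), x⟩ = 0 for all x ∈ S^k) there exists x ∈ S^k such that f(x) = 0. -/
open scoped RealInnerProductSpace

open MeasureTheory Polynomial Metric Module Topology Manifold
open scoped NNReal

section RadialExtension

variable {E F : Type*} [NormedAddCommGroup E] [NormedSpace ℝ E]
  [NormedAddCommGroup F] [NormedSpace ℝ F]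

/-- The extension of a map on the unit sphere that is positively homogeneous of degree one. -/
noncomputable def radialExtension (v : E → F) (x : E) : F := ‖x‖ • v (‖x‖⁻¹ • x)

theorem inv_norm_smul_mem_unitSphere {x : E} (hx : x ≠ 0) : ‖x‖⁻¹ • x ∈ sphere (0 : E) 1 := by
  rw [mem_sphere_zero_iff_norm]
  exact norm_smul_inv_norm (𝕜 := ℝ) hx

theorem norm_radialExtension {v : E → F} (hv : ∀ x ∈ sphere (0 : E) 1, ‖v x‖ = 1) (x : E) :
    ‖radialExtension v x‖ = ‖x‖ := by
  rcases eq_or_ne x 0 with rfl | hx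
  · simp [radialExtension]
  · simp [radialExtension, norm_smul, hv _ (inv_norm_smul_mem_unitSphere hx)]

theorem lipschitzWith_radialExtension {v : E → F} {K : ℝ≥0}
    (hv : ∀ x ∈ sphere (0 : E) 1, ‖v x‖ = 1) (hK : LipschitzOnWith K v (sphere 0 1)) :
    LipschitzWith (1 + 2 * K) (radialExtension v) := by
  refine LipschitzWith.of_dist_le_mul fun x y => ?_
  have hK0 : (0 : ℝ) ≤ K := K.2
  have hxy : |‖x‖ - ‖y‖| ≤ ‖x - y‖ := abs_norm_sub_norm_le x y
  push_cast
  rw [dist_eq_norm, dist_eq_norm]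
  rcases eq_or_ne x 0 with rfl | hx
  · have := norm_radialExtension hv y
    simp only [radialExtension, norm_zero, zero_smul, zero_sub, norm_neg] at this ⊢
    rw [this]
    nlinarith [norm_nonneg y]
  rcases eq_or_ne y 0 with rfl | hy
  · have := norm_radialExtension hv x
    simp only [radialExtension, norm_zero, zero_smul, sub_zero] at this ⊢
    rw [this]
    nlinarith [norm_nonneg x]
  have hx' := inv_norm_smul_mem_unitSphere hx
  have hy' := inv_norm_smul_mem_unitSphere hy
  have hdir : ‖y‖ * ‖‖x‖⁻¹ • x - ‖y‖⁻¹ • y‖ ≤ 2 * ‖x - y‖ := by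
    have heq : ‖y‖ • (‖x‖⁻¹ • x - ‖y‖⁻¹ • y) = (‖y‖ - ‖x‖) • (‖x‖⁻¹ • x) + (x - y) := by
      rw [smul_sub, sub_smul, smul_inv_smul₀ (norm_ne_zero_iff.2 hy),
        smul_inv_smul₀ (norm_ne_zero_iff.2 hx)]
      abel
    calc ‖y‖ * ‖‖x‖⁻¹ • x - ‖y‖⁻¹ • y‖ = ‖(‖y‖ - ‖x‖) • (‖x‖⁻¹ • x) + (x - y)‖ := by
          rw [← heq, norm_smul, norm_norm]
      _ ≤ ‖(‖y‖ - ‖x‖) • (‖x‖⁻¹ • x)‖ + ‖x - y‖ := norm_add_le _ _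
      _ = |‖x‖ - ‖y‖| + ‖x - y‖ := by
          rw [norm_smul, mem_sphere_zero_iff_norm.1 hx', mul_one, Real.norm_eq_abs, abs_sub_comm]
      _ ≤ 2 * ‖x - y‖ := by linarith
  have hlip := hK.dist_le_mul _ hx' _ hy'
  rw [dist_eq_norm, dist_eq_norm] at hlip
  have hsplit : radialExtension v x - radialExtension v y =
      (‖x‖ - ‖y‖) • v (‖x‖⁻¹ • x) + ‖y‖ • (v (‖x‖⁻¹ • x) - v (‖y‖⁻¹ • y)) := by
    simp only [radialExtension, sub_smul, smul_sub]
    abel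
  calc ‖radialExtension v x - radialExtension v y‖
      ≤ ‖(‖x‖ - ‖y‖) • v (‖x‖⁻¹ • x)‖ + ‖‖y‖ • (v (‖x‖⁻¹ • x) - v (‖y‖⁻¹ • y))‖ := by
        rw [hsplit]; exact norm_add_le _ _
    _ = |‖x‖ - ‖y‖| + ‖y‖ * ‖v (‖x‖⁻¹ • x) - v (‖y‖⁻¹ • y)‖ := by
        rw [norm_smul, norm_smul, hv _ hx', mul_one, norm_norm, Real.norm_eq_abs]
    _ ≤ ‖x - y‖ + ‖y‖ * (K * ‖‖x‖⁻¹ • x - ‖y‖⁻¹ • y‖) := by gcongr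
    _ ≤ (1 + 2 * K) * ‖x - y‖ := by nlinarith

end RadialExtension

section Determinant

variable {E : Type*} [NormedAddCommGroup E] [NormedSpace ℝ E] [FiniteDimensional ℝ E]

/-- A perturbation of the identity by an operator of norm less than one preserves orientation. -/
theorem det_id_add_smul_pos {A : E →L[ℝ] E} {K t : ℝ} (hA : ‖A‖ ≤ K) (ht : 0 ≤ t)
    (htK : t * K < 1) : 0 < (ContinuousLinearMap.id ℝ E + t • A).det := by
  have hcont : Continuous fun s : ℝ => (ContinuousLinearMap.id ℝ E + s • A).det :=
    ContinuousLinearMap.continuous_det.comp (by fun_prop)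
  have hne : ∀ s ∈ Set.Icc 0 t, (ContinuousLinearMap.id ℝ E + s • A).det ≠ 0 := by
    intro s hs hdet
    have hlt := LinearMap.bot_lt_ker_of_det_eq_zero hdet
    obtain ⟨x, hx, hx0⟩ := Submodule.exists_mem_ne_zero_of_ne_bot hlt.ne'
    have hx' : x = -(s • A x) := by
      have : x + s • A x = 0 := by simpa using hx
      exact eq_neg_of_add_eq_zero_left this
    have hpos : 0 < ‖x‖ := norm_pos_iff.2 hx0
    have hle : ‖x‖ ≤ t * K * ‖x‖ := by
      calc ‖x‖ = s * ‖A x‖ := by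
            conv_lhs => rw [hx', norm_neg, norm_smul, Real.norm_eq_abs, abs_of_nonneg hs.1]
        _ ≤ t * (K * ‖x‖) := by
            gcongr
            · exact hs.2
            · exact A.le_of_opNorm_le hA x
        _ = t * K * ‖x‖ := by ring
    nlinarith
  by_contra! hle
  have h0 : (ContinuousLinearMap.id ℝ E + (0 : ℝ) • A).det = 1 := by
    rw [zero_smul, add_zero]; exact LinearMap.det_id
  obtain ⟨s, hs, hs0⟩ := intermediate_value_Icc' ht hcont.continuousOn
    (show (0 : ℝ) ∈ Set.Icc _ _ from ⟨hle, by simp only [h0]; exact zero_le_one⟩)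
  exact hne s hs hs0

/-- The determinant `det (1 + t A)` is polynomial in `t`, of degree at most the dimension. -/
theorem exists_polynomial_det_id_add_smul (A : E →L[ℝ] E) :
    ∃ p : ℝ[X], p.natDegree ≤ finrank ℝ E ∧
      ∀ t : ℝ, p.eval t = (ContinuousLinearMap.id ℝ E + t • A).det := by
  let b := finBasis ℝ E
  let M := LinearMap.toMatrix b b (A : E →ₗ[ℝ] E)
  refine ⟨((X : ℝ[X]) • M.map C + (1 : Matrix _ _ ℝ).map C).det, ?_, fun t => ?_⟩
  · simpa using natDegree_det_X_add_C_le M 1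
  · have h : (ContinuousLinearMap.id ℝ E + t • A).det = (t • M + 1).det := by
      rw [ContinuousLinearMap.det, ← LinearMap.det_toMatrix b]
      congr 1
      have : ((ContinuousLinearMap.id ℝ E + t • A : E →L[ℝ] E) : E →ₗ[ℝ] E) =
        LinearMap.id + t • (A : E →ₗ[ℝ] E) := rfl
      rw [this, map_add, map_smul, LinearMap.toMatrix_id, add_comm]
    rw [h, ← coe_evalRingHom, RingHom.map_det]
    congr 1
    ext i j
    by_cases hij : i = j <;> simp [hij, mul_comm t]

end Determinant

/-- Averages of polynomials of bounded degree are polynomial, provided that the values are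
integrable at sufficiently many nodes. -/
theorem exists_polynomial_integral_eval {α : Type*} [MeasurableSpace α] (μ : Measure α)
    (p : α → ℝ[X]) (d : ℕ) (hp : ∀ x, (p x).natDegree ≤ d) (S : Set ℝ) (hS : S.Infinite)
    (hint : ∀ t ∈ S, Integrable (fun x => (p x).eval t) μ) :
    ∃ q : ℝ[X], ∀ t, q.eval t = ∫ x, (p x).eval t ∂μ := by
  obtain ⟨s, hsS, hs⟩ := hS.exists_subset_card_eq (d + 1)
  refine ⟨Lagrange.interpolate s id fun i => ∫ x, (p x).eval i ∂μ, fun t => ?_⟩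
  have hlag : ∀ x, (p x).eval t = ∑ i ∈ s, (p x).eval i * (Lagrange.basis s id i).eval t := by
    intro x
    have hdeg : (p x).degree < s.card := by
      refine degree_le_natDegree.trans_lt ?_
      rw [hs]
      exact_mod_cast Nat.lt_succ_of_le (hp x)
    conv_lhs => rw [Lagrange.eq_interpolate (v := id) Function.injective_id.injOn hdeg]
    simp [Lagrange.interpolate_apply, eval_finsetSum]
  simp_rw [hlag]
  rw [integral_finsetSum _ fun i hi => (hint i (hsS hi)).mul_const _]
  simp [Lagrange.interpolate_apply, eval_finsetSum, integral_mul_const]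

/-- An odd power of `X ^ 2 + 1` is not a constant multiple of a square. -/
theorem not_forall_sq_eval_eq {n : ℕ} (hn : Odd n) (q : ℝ[X]) {c : ℝ} (hc : c ≠ 0) {S : Set ℝ}
    (hS : S.Infinite) : ¬ ∀ t ∈ S, q.eval t ^ 2 = c * (1 + t ^ 2) ^ n := by
  intro h
  have heq : q ^ 2 = C c * (1 + X ^ 2) ^ n :=
    eq_of_infinite_eval_eq _ _ (hS.mono fun t ht => by simpa using h t ht)
  have hmap : (q.map Complex.ofRealHom) ^ 2 =
      C (c : ℂ) * ((X - C Complex.I) ^ n * (X - C (-Complex.I)) ^ n) := by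
    have hfac : (X - C Complex.I) * (X - C (-Complex.I)) = (1 + X ^ 2 : ℂ[X]) := by
      have : (C Complex.I : ℂ[X]) * C Complex.I = -1 := by
        rw [← C_mul, Complex.I_mul_I]; simp
      rw [C_neg]
      linear_combination -this
    rw [← mul_pow, hfac, ← Polynomial.map_pow, heq]
    simp
  have hc' : (c : ℂ) ≠ 0 := by exact_mod_cast hc
  have hI : -Complex.I ≠ Complex.I := by
    intro hI
    have := congrArg Complex.im hI
    norm_num at this
  have hne : C (c : ℂ) * ((X - C Complex.I) ^ n * (X - C (-Complex.I)) ^ n) ≠ 0 :=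
    mul_ne_zero (C_ne_zero.2 hc') (mul_ne_zero (pow_ne_zero _ (X_sub_C_ne_zero _))
      (pow_ne_zero _ (X_sub_C_ne_zero _)))
  have hcount := congrArg (fun p : ℂ[X] => p.roots.count Complex.I) hmap
  simp only [roots_pow, Multiset.count_nsmul, roots_C_mul _ hc',
    roots_mul (right_ne_zero_of_mul hne), roots_X_sub_C, Multiset.count_add,
    Multiset.count_singleton_self, Multiset.count_singleton, hI.symm, if_false] at hcount
  obtain ⟨m, rfl⟩ := hn
  omega

section TangentField

variable {E : Type*} [NormedAddCommGroup E] [InnerProductSpace ℝ E]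

theorem norm_add_smul_of_inner_eq_zero {x y : E} (hxy : ⟪y, x⟫ = 0) (hn : ‖y‖ = ‖x‖) (t : ℝ) :
    ‖x + t • y‖ = √(1 + t ^ 2) * ‖x‖ := by
  have hsq : ‖x + t • y‖ ^ 2 = (1 + t ^ 2) * ‖x‖ ^ 2 := by
    rw [norm_add_sq_real, inner_smul_right, real_inner_comm, hxy, norm_smul, hn, mul_pow,
      Real.norm_eq_abs, sq_abs]
    ring
  rw [← Real.sqrt_sq (norm_nonneg (x + t • y)), hsq, Real.sqrt_mul (by positivity),
    Real.sqrt_sq (norm_nonneg x)]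

variable [FiniteDimensional ℝ E]

theorem bijective_add_smul_of_lipschitzWith [Nontrivial E] {u : E → E} {K : ℝ≥0}
    (hu : LipschitzWith K u) {t : ℝ} (ht : 0 ≤ t) (htK : t * K < 1) :
    Function.Bijective fun x => x + t • u x := by
  have happrox : ApproximatesLinearOn (fun x => x + t • u x)
      ((ContinuousLinearEquiv.refl ℝ E : E ≃L[ℝ] E) : E →L[ℝ] E) Set.univ (t.toNNReal * K) := by
    intro x _ y _
    have h : x + t • u x - (y + t • u y) - (x - y) = t • (u x - u y) := by
      rw [smul_sub]; abel
    have hxy := hu.dist_le_mul x y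
    rw [dist_eq_norm, dist_eq_norm] at hxy
    simp only [ContinuousLinearEquiv.coe_refl, ContinuousLinearMap.id_apply, h, norm_smul,
      NNReal.coe_mul, Real.coe_toNNReal t ht, Real.norm_eq_abs, abs_of_nonneg ht]
    rw [mul_assoc]
    gcongr
  have hc : t.toNNReal * K < ‖((ContinuousLinearEquiv.refl ℝ E).symm : E →L[ℝ] E)‖₊⁻¹ := by
    rw [← NNReal.coe_lt_coe]
    simpa [Real.coe_toNNReal t ht] using htK
  exact ⟨Set.injOn_univ.1 (happrox.injOn (Or.inr hc)), happrox.surjective (Or.inr hc)⟩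

theorem image_add_smul_ball_diff_zero [Nontrivial E] {u : E → E} {K : ℝ≥0}
    (hu : LipschitzWith K u) (hnorm : ∀ x, ‖u x‖ = ‖x‖) (horth : ∀ x, ⟪u x, x⟫ = 0)
    {t : ℝ} (ht : 0 ≤ t) (htK : t * K < 1) :
    (fun x => x + t • u x) '' (ball 0 1 \ {0}) = ball 0 √(1 + t ^ 2) \ {0} := by
  have hbij := bijective_add_smul_of_lipschitzWith hu ht htK
  have hr : 0 < √(1 + t ^ 2) := by positivity
  have hmem : ∀ x, x + t • u x ∈ ball (0 : E) √(1 + t ^ 2) \ {0} ↔ x ∈ ball (0 : E) 1 \ {0} := by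
    intro x
    simp only [Set.mem_sdiff, mem_ball_zero_iff, Set.mem_singleton_iff]
    rw [← norm_eq_zero, norm_add_smul_of_inner_eq_zero (horth x) (hnorm x), ← norm_eq_zero (a := x),
      mul_lt_iff_lt_one_right hr, mul_eq_zero]
    simp [hr.ne']
  ext y
  obtain ⟨x, rfl⟩ := hbij.2 y
  rw [hmem]
  exact hbij.1.mem_set_image

/-- In odd dimension there is no Lipschitz map, differentiable away from the origin, that
preserves norms and is everywhere orthogonal to the position vector. -/
theorem not_exists_lipschitz_orthogonal_field (hodd : Odd (finrank ℝ E)) {u : E → E} {K : ℝ≥0}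
    (hu : LipschitzWith K u) (hnorm : ∀ x, ‖u x‖ = ‖x‖) (horth : ∀ x, ⟪u x, x⟫ = 0)
    (hdiff : ∀ x ≠ 0, DifferentiableAt ℝ u x) : False := by
  have : Nontrivial E := nontrivial_of_finrank_pos (R := ℝ) hodd.pos
  borelize E
  let μ : Measure E := Measure.addHaar
  let s : Set E := ball 0 1 \ {0}
  have hs : MeasurableSet s := measurableSet_ball.diff (measurableSet_singleton 0)
  have hK1 : (0 : ℝ) < K + 1 := by positivity
  let S : Set ℝ := Set.Ioo 0 (1 / (K + 1))
  have hS : S.Infinite := Set.Ioo_infinite (by positivity)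
  have hSK : ∀ t ∈ S, t * K < 1 := by
    intro t ht
    have := (lt_div_iff₀ hK1).1 ht.2
    nlinarith [ht.1]
  have hderiv : ∀ t : ℝ, ∀ x ∈ s, HasFDerivWithinAt (fun x => x + t • u x)
      (ContinuousLinearMap.id ℝ E + t • fderiv ℝ u x) s x := fun t x hx =>
    ((hasFDerivAt_id x).add ((hdiff x hx.2).hasFDerivAt.const_smul t)).hasFDerivWithinAt
  have hpos : ∀ t ∈ S, ∀ x, 0 < (ContinuousLinearMap.id ℝ E + t • fderiv ℝ u x).det :=
    fun t ht x => det_id_add_smul_pos (norm_fderiv_le_of_lipschitz ℝ hu) ht.1.le (hSK t ht)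
  have hinj : ∀ t ∈ S, Set.InjOn (fun x => x + t • u x) s := fun t ht =>
    (bijective_add_smul_of_lipschitzWith hu ht.1.le (hSK t ht)).1.injOn
  choose p hpdeg hpeval using fun x => exists_polynomial_det_id_add_smul (fderiv ℝ u x)
  have hint : ∀ t ∈ S, IntegrableOn (fun x => (p x).eval t) s μ := by
    intro t ht
    have h1 : IntegrableOn (fun _ => (1 : ℝ)) ((fun x => x + t • u x) '' s) μ := by
      rw [image_add_smul_ball_diff_zero hu hnorm horth ht.1.le (hSK t ht)]
      exact integrableOn_const ((measure_mono Set.sdiff_subset).trans_lt measure_ball_lt_top).ne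
    have h2 := (integrableOn_image_iff_integrableOn_abs_det_fderiv_smul μ hs (hderiv t)
      (hinj t ht) _).1 h1
    simpa only [hpeval, abs_of_pos (hpos t ht _), smul_eq_mul, mul_one] using h2
  obtain ⟨q, hq⟩ := exists_polynomial_integral_eval (μ.restrict s) p _ hpdeg S hS hint
  have hV : 0 < μ.real (ball 0 1) :=
    ENNReal.toReal_pos (measure_ball_pos μ 0 one_pos).ne' measure_ball_lt_top.ne
  refine not_forall_sq_eval_eq hodd q (pow_pos hV 2).ne' hS fun t ht => ?_
  have hvol : q.eval t = √(1 + t ^ 2) ^ finrank ℝ E * μ.real (ball 0 1) := by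
    have h := integral_image_eq_integral_abs_det_fderiv_smul μ hs (hderiv t) (hinj t ht)
      fun _ => (1 : ℝ)
    rw [image_add_smul_ball_diff_zero hu hnorm horth ht.1.le (hSK t ht)] at h
    simp only [abs_of_pos (hpos t ht _), smul_eq_mul, mul_one] at h
    simp only [hq, hpeval]
    rw [← h, setIntegral_const, smul_eq_mul, mul_one, measureReal_def,
      measure_sdiff_null (measure_singleton 0),
      Measure.addHaar_ball_of_pos μ 0 (by positivity : 0 < √(1 + t ^ 2)), ENNReal.toReal_mul,
      ENNReal.toReal_ofReal (by positivity), measureReal_def]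
  rw [hvol, mul_pow, ← pow_mul, mul_comm _ 2, pow_mul, Real.sq_sqrt (by positivity), mul_comm]

/-- A continuous nonvanishing tangent field on the unit sphere can be replaced by a unit tangent
field which is continuously differentiable near the sphere. -/
theorem exists_contDiffAt_unit_tangent_field {f : E → E}
    (hcont : ContinuousOn f (sphere 0 1)) (htangent : ∀ x ∈ sphere (0 : E) 1, ⟪f x, x⟫ = 0)
    (hne : ∀ x ∈ sphere (0 : E) 1, f x ≠ 0) :
    ∃ v : E → E, (∀ x ∈ sphere (0 : E) 1, ContDiffAt ℝ 1 v x) ∧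
      (∀ x ∈ sphere (0 : E) 1, ‖v x‖ = 1) ∧ ∀ x ∈ sphere (0 : E) 1, ⟪v x, x⟫ = 0 := by
  have hconv : ∀ x : E, Convex ℝ {z : E | x ∈ sphere (0 : E) 1 → ‖z - f x‖ < ‖f x‖} := by
    intro x
    by_cases hx : x ∈ sphere (0 : E) 1
    · simpa only [hx, true_imp_iff, ball, dist_eq_norm] using convex_ball (f x) ‖f x‖
    · simpa only [hx, false_imp_iff, Set.ofPred_true] using convex_univ
  obtain ⟨g, hg⟩ := exists_contMDiffMap_forall_mem_convex_of_local_const (n := 1) 𝓘(ℝ, E) hconv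
    (by
      intro x
      by_cases hx : x ∈ sphere (0 : E) 1
      · refine ⟨f x, ?_⟩
        have hlt : ∀ᶠ y in 𝓝[sphere 0 1] x, ‖f x - f y‖ < ‖f y‖ := by
          have h1 : ContinuousWithinAt (fun y => ‖f x - f y‖) (sphere 0 1) x :=
            (continuousWithinAt_const.sub (hcont x hx)).norm
          refine h1.eventually_lt (hcont x hx).norm ?_
          simpa using hne x hx
        exact eventually_nhdsWithin_iff.1 hlt
      · refine ⟨0, ?_⟩
        filter_upwards [isClosed_sphere.isOpen_compl.mem_nhds hx] with y hy hy'
        exact absurd hy' hy)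
  have hgd : ContDiff ℝ 1 g := g.contMDiff.contDiff
  let w : E → E := fun x => g x - ⟪g x, x⟫ • x
  have hwd : ContDiff ℝ 1 w := hgd.sub ((hgd.inner ℝ contDiff_id).smul contDiff_id)
  have hworth : ∀ x ∈ sphere (0 : E) 1, ⟪w x, x⟫ = 0 := by
    intro x hx
    simp [w, inner_sub_left, inner_smul_left, mem_sphere_zero_iff_norm.1 hx]
  have hw : ∀ x ∈ sphere (0 : E) 1, w x ≠ 0 := by
    intro x hx hwx
    have hgx : g x = ⟪g x, x⟫ • x := sub_eq_zero.1 hwx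
    have hinner : ⟪g x, f x⟫ = 0 := by
      rw [hgx, inner_smul_left, real_inner_comm (f x) x, htangent x hx, mul_zero]
    have hlt := hg x hx
    have hsq := norm_sub_sq_real (g x) (f x)
    rw [hinner] at hsq
    nlinarith [sq_nonneg ‖g x‖, norm_nonneg (g x - f x)]
  refine ⟨fun x => ‖w x‖⁻¹ • w x, fun x hx => ?_, fun x hx => ?_, fun x hx => ?_⟩
  · exact ((hwd.contDiffAt.norm ℝ (hw x hx)).inv (norm_ne_zero_iff.2 (hw x hx))).smul
      hwd.contDiffAt
  · exact norm_smul_inv_norm (𝕜 := ℝ) (hw x hx)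
  · rw [inner_smul_left, hworth x hx, mul_zero]

theorem exists_zero_of_tangent_field_of_odd_finrank (hodd : Odd (finrank ℝ E)) {f : E → E}
    (hcont : ContinuousOn f (sphere 0 1)) (htangent : ∀ x ∈ sphere (0 : E) 1, ⟪f x, x⟫ = 0) :
    ∃ x ∈ sphere (0 : E) 1, f x = 0 := by
  by_contra! hne
  obtain ⟨v, hvd, hvn, hvt⟩ := exists_contDiffAt_unit_tangent_field hcont htangent hne
  have hloc : LocallyLipschitzOn (sphere (0 : E) 1) v := by
    intro x hx
    obtain ⟨K, t, ht, hK⟩ := (hvd x hx).exists_lipschitzOnWith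
    exact ⟨K, t, mem_nhdsWithin_of_mem_nhds ht, hK⟩
  obtain ⟨K, hK⟩ := hloc.exists_lipschitzOnWith_of_compact (isCompact_sphere 0 1)
  refine not_exists_lipschitz_orthogonal_field hodd (lipschitzWith_radialExtension hvn hK)
    (norm_radialExtension hvn) (fun x => ?_) fun x hx => ?_
  · rcases eq_or_ne x 0 with rfl | hx
    · simp
    · have h := hvt _ (inv_norm_smul_mem_unitSphere hx)
      rw [inner_smul_right] at h
      have h' := (mul_eq_zero.1 h).resolve_left (inv_ne_zero (norm_ne_zero_iff.2 hx))
      rw [radialExtension, inner_smul_left, h', mul_zero]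
  · have hn : DifferentiableAt ℝ (fun y : E => ‖y‖) x := differentiableAt_id.norm ℝ hx
    have hdir : DifferentiableAt ℝ (fun y : E => ‖y‖⁻¹ • y) x :=
      (hn.inv (norm_ne_zero_iff.2 hx)).smul differentiableAt_id
    have hv := (hvd _ (inv_norm_smul_mem_unitSphere hx)).differentiableAt one_ne_zero
    exact hn.smul (DifferentiableAt.comp x hv hdir)

end TangentField

/-- **Hairy Ball Theorem (Poincaré–Brouwer).** If `k ≥ 2` is even, every continuous
tangent vector field on the unit sphere `S^k ⊆ ℝ^{k+1}` has a zero. -/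
theorem hairy_ball_theorem (k : ℕ) (hk : 2 ≤ k) (hkeven : Even k)
    (f : EuclideanSpace ℝ (Fin (k + 1)) → EuclideanSpace ℝ (Fin (k + 1)))
    (hcont : ContinuousOn f (Metric.sphere (0 : EuclideanSpace ℝ (Fin (k + 1))) 1))
    (htangent : ∀ x ∈ Metric.sphere (0 : EuclideanSpace ℝ (Fin (k + 1))) 1,
      ⟪f x, x⟫ = 0) :
    ∃ x ∈ Metric.sphere (0 : EuclideanSpace ℝ (Fin (k + 1))) 1, f x = 0 :=
  exists_zero_of_tangent_field_of_odd_finrank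
    (by rw [finrank_euclideanSpace_fin]; exact hkeven.add_one) hcont htangent
end

section
/- For every k ≥ 1, the inverse stereographic projection SP⁻¹ : ℝ^k → ℝ^{k+1} is Lipschitz-continuous with Lipschitz constant 4√k when both ℝ^k and ℝ^{k+1} are equipped with the ℓ∞-norm: for all z, z' ∈ ℝ^k, ‖SP⁻¹(z) − SP⁻¹(z')‖∞ ≤ 4√k · ‖z − z'‖∞. -/
open Finset

noncomputable section

/-- The inverse stereographic projection
`SP⁻¹(z) = p + (2 / (1 + Σ zᵢ²)) · (−1, z₁, …, z_k)`. -/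
def SPinv {k : ℕ} (z : Fin k → ℝ) : Fin (k + 1) → ℝ :=
  Fin.cons (1 - 2 / (1 + ∑ j, z j ^ 2))
    (fun i => (2 / (1 + ∑ j, z j ^ 2)) * z i)

/-- The chordal distance formula for the inverse stereographic projection. -/
lemma sum_sq_SPinv_sub {k : ℕ} (z z' : Fin k → ℝ) :
    ∑ i, (SPinv z i - SPinv z' i) ^ 2 =
      4 * (∑ j, (z j - z' j) ^ 2) / ((1 + ∑ j, z j ^ 2) * (1 + ∑ j, z' j ^ 2)) := by
  have expand (s t : ℝ) : ∑ j, (s * z j - t * z' j) ^ 2 =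
      s ^ 2 * ∑ j, z j ^ 2 + t ^ 2 * ∑ j, z' j ^ 2 - 2 * s * t * ∑ j, z j * z' j := by
    simp only [mul_sum, ← sum_add_distrib, ← sum_sub_distrib]
    exact sum_congr rfl fun j _ => by ring
  have hdiff : ∑ j, (z j - z' j) ^ 2 =
      ∑ j, z j ^ 2 + ∑ j, z' j ^ 2 - 2 * ∑ j, z j * z' j := by
    simpa using expand 1 1
  have ha : 0 ≤ ∑ j, z j ^ 2 := sum_nonneg fun j _ => sq_nonneg _
  have hb : 0 ≤ ∑ j, z' j ^ 2 := sum_nonneg fun j _ => sq_nonneg _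
  rw [Fin.sum_univ_succ]
  simp only [SPinv, Fin.cons_zero, Fin.cons_succ]
  rw [expand, hdiff]
  generalize ∑ j, z j ^ 2 = a at *
  generalize ∑ j, z' j ^ 2 = b at *
  have ha' : 1 + a ≠ 0 := by positivity
  have hb' : 1 + b ≠ 0 := by positivity
  field_simp
  ring

/-- The squared Euclidean norm is at most the dimension times the squared sup norm. -/
lemma sum_sq_le_card_mul_norm_sq {k : ℕ} (v : Fin k → ℝ) :
    ∑ j, v j ^ 2 ≤ k * ‖v‖ ^ 2 := by
  have h := sum_le_card_nsmul univ (fun j => v j ^ 2) (‖v‖ ^ 2) fun j _ =>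
    sq_le_sq' (abs_le.mp (norm_le_pi_norm v j)).1 (abs_le.mp (norm_le_pi_norm v j)).2
  simpa using h

/-- The inverse stereographic projection is `4√k`-Lipschitz when both `ℝ^k` and
`ℝ^{k+1}` carry the ℓ∞-norm (which is the default norm on `Fin n → ℝ`). -/
theorem spinv_lipschitz (k : ℕ) (hk : 1 ≤ k) (z z' : Fin k → ℝ) :
    ‖SPinv z - SPinv z'‖ ≤ 4 * Real.sqrt k * ‖z - z'‖ := by
  refine (pi_norm_le_iff_of_nonneg (by positivity)).mpr fun i => ?_
  refine abs_le_of_sq_le_sq ?_ (by positivity)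
  have ha : 0 ≤ ∑ j, z j ^ 2 := sum_nonneg fun j _ => sq_nonneg _
  have hb : 0 ≤ ∑ j, z' j ^ 2 := sum_nonneg fun j _ => sq_nonneg _
  have hd : 0 ≤ ∑ j, (z j - z' j) ^ 2 := sum_nonneg fun j _ => sq_nonneg _
  calc (SPinv z i - SPinv z' i) ^ 2
      ≤ ∑ i, (SPinv z i - SPinv z' i) ^ 2 :=
        single_le_sum (f := fun i => (SPinv z i - SPinv z' i) ^ 2)
          (fun _ _ => sq_nonneg _) (mem_univ i)
    _ = 4 * (∑ j, (z j - z' j) ^ 2) / ((1 + ∑ j, z j ^ 2) * (1 + ∑ j, z' j ^ 2)) :=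
        sum_sq_SPinv_sub z z'
    _ ≤ 4 * ∑ j, (z j - z' j) ^ 2 :=
        div_le_self (by positivity) (by nlinarith [mul_nonneg ha hb])
    _ ≤ 16 * (k * ‖z - z'‖ ^ 2) := by
        have h := sum_sq_le_card_mul_norm_sq (z - z')
        simp only [Pi.sub_apply] at h
        linarith
    _ = (4 * Real.sqrt k * ‖z - z'‖) ^ 2 := by
        rw [mul_pow, mul_pow, Real.sq_sqrt (Nat.cast_nonneg k)]
        ring

end
end

section
/- For every k ≥ 1 and every x ∈ S^k with x_0 < 1, the vectors b_1(x), ..., b_k(x) are tangent to S^k at x and orthonormal: ⟨b_i(x), x⟩ = 0 for all i ∈ {1,...,k}, and ⟨b_i(x), b_j(x)⟩ = 1 if i = j and 0 if i ≠ j, for all i, j ∈ {1,...,k}. -/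
open Finset

noncomputable section

/-- The ℓ₂-norm on `ℝⁿ`. -/
def l2 {n : ℕ} (x : Fin n → ℝ) : ℝ := Real.sqrt (∑ i, x i ^ 2)

/-- The standard inner product on `ℝⁿ`. -/
def dotp {n : ℕ} (x y : Fin n → ℝ) : ℝ := ∑ i, x i * y i

/-- The unit sphere `S^k` in `ℝ^{k+1}`. -/
def unitSphere (k : ℕ) : Set (Fin (k + 1) → ℝ) := {x | l2 x = 1}

/-- The tangent vector `b_i(x)` (for `i ∈ {1, …, k}`, encoded as `i : Fin k`
pointing at coordinate `i.succ`): `[b_i(x)]₀ = x_i`,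
`[b_i(x)]_i = 1 − x_i² / (1 − x₀)`, and `[b_i(x)]_j = −x_j x_i / (1 − x₀)` otherwise. -/
def tb {k : ℕ} (x : Fin (k + 1) → ℝ) (i : Fin k) : Fin (k + 1) → ℝ := fun j =>
  if j = 0 then x i.succ
  else if j = i.succ then 1 - (x i.succ) ^ 2 / (1 - x 0)
  else -(x j) * x i.succ / (1 - x 0)

lemma tb_zero {k : ℕ} (x : Fin (k + 1) → ℝ) (i : Fin k) : tb x i 0 = x i.succ := by
  simp [tb]

lemma tb_succ {k : ℕ} (x : Fin (k + 1) → ℝ) (i m : Fin k) :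
    tb x i m.succ = (if m = i then 1 else 0) - x i.succ / (1 - x 0) * x m.succ := by
  by_cases h : m = i
  · subst h
    simp [tb]
    ring
  · simp [tb, h]
    ring

lemma dotp_succ {k : ℕ} (x y : Fin (k + 1) → ℝ) :
    dotp x y = x 0 * y 0 + ∑ m : Fin k, x m.succ * y m.succ :=
  Fin.sum_univ_succ _

lemma dotp_tb {k : ℕ} (x y : Fin (k + 1) → ℝ) (i : Fin k) :
    dotp (tb x i) y =
      x i.succ * y 0 + y i.succ - x i.succ / (1 - x 0) * (dotp y x - y 0 * x 0) := by
  rw [dotp_succ y x, dotp_succ, tb_zero, add_sub_cancel_left, Finset.mul_sum, add_sub_assoc]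
  simp only [tb_succ, sub_mul, Finset.sum_sub_distrib, ite_mul, one_mul, zero_mul,
    Finset.sum_ite_eq', Finset.mem_univ, if_true]
  congr 2
  exact Finset.sum_congr rfl fun m _ => by ring

lemma dotp_self_of_mem_unitSphere {k : ℕ} {x : Fin (k + 1) → ℝ} (hx : x ∈ unitSphere k) :
    dotp x x = 1 := by
  have h : Real.sqrt (∑ i, x i ^ 2) = 1 := hx
  simpa [dotp, pow_two] using Real.sqrt_eq_one.mp h

/-- For `x ∈ S^k` with `x₀ < 1`, the vectors `b_1(x), …, b_k(x)` are tangent to the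
sphere at `x` and orthonormal. -/
theorem tangent_basis_orthonormal (k : ℕ) (hk : 1 ≤ k)
    (x : Fin (k + 1) → ℝ) (hx : x ∈ unitSphere k) (hx0 : x 0 < 1) :
    (∀ i : Fin k, dotp (tb x i) x = 0) ∧
    (∀ i j : Fin k, dotp (tb x i) (tb x j) = if i = j then 1 else 0) := by
  have h0 : 1 - x 0 ≠ 0 := by linarith
  have tangent : ∀ i : Fin k, dotp (tb x i) x = 0 := fun i => by
    rw [dotp_tb, dotp_self_of_mem_unitSphere hx]
    field_simp
    ring
  refine ⟨tangent, fun i j => ?_⟩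
  rw [dotp_tb, tangent, tb_zero, tb_succ]
  field_simp
  ring

end
end

section
/- Let k ≥ 1, let ∅ ≠ I ⊆ {1,...,k}, and let z ∈ S^{k-1} be such that z_i ≥ 0 for i ∈ I and z_j = 0 for j ∉ I. Then: (a) w_j(z) = 1/√k for every j ∉ I; (b) there exists i ∈ I with w_i(z) ≤ −1/√k; and (c) for every u ∈ ℝ^k with ‖u − w(z)‖∞ < 1/(2√k), every index m attaining min_{ℓ ∈ {1,...,k}} u_ℓ belongs to I. -/
open Finset

noncomputable section

/-- The ideal colouring direction `w : S^{k-1} → ℝ^k`,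
`wᵢ(z) = (1 − 2 zᵢ Σⱼ zⱼ) / √k`. -/
def wmap {k : ℕ} (z : Fin k → ℝ) : Fin k → ℝ :=
  fun i => (1 - 2 * z i * ∑ j, z j) / Real.sqrt k

/-- If `z` is a nonnegative unit vector supported on `I`, then its largest coordinate times its
coordinate sum is at least `1`. -/
lemma exists_one_le_mul_sum {k : ℕ} {I : Finset (Fin k)} (hI : I.Nonempty)
    {z : Fin k → ℝ} (hz : l2 z = 1)
    (hpos : ∀ i ∈ I, 0 ≤ z i) (hzero : ∀ j ∉ I, z j = 0) :
    ∃ i ∈ I, 1 ≤ z i * ∑ j, z j := by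
  obtain ⟨i, hi, hmax⟩ := I.exists_max_image z hI
  refine ⟨i, hi, ?_⟩
  rw [l2, Real.sqrt_eq_one] at hz
  rw [← hz, Finset.mul_sum]
  refine Finset.sum_le_sum fun j _ => ?_
  by_cases hj : j ∈ I
  · rw [sq]
    exact mul_le_mul_of_nonneg_right (hmax j hj) (hpos j hj)
  · simp [hzero j hj]

/-- For a nonempty `I ⊆ {1, …, k}` and `z ∈ S^{k-1}` supported on `I` with
nonnegative coordinates: (a) `wⱼ(z) = 1/√k` for `j ∉ I`; (b) some `i ∈ I` has
`wᵢ(z) ≤ −1/√k`; (c) any `u` with `‖u − w(z)‖∞ < 1/(2√k)` attains its minimum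
coordinate only at indices in `I`. -/
theorem wmap_face_properties (k : ℕ) (hk : 1 ≤ k)
    (I : Finset (Fin k)) (hI : I.Nonempty)
    (z : Fin k → ℝ) (hz : l2 z = 1)
    (hpos : ∀ i ∈ I, 0 ≤ z i) (hzero : ∀ j ∉ I, z j = 0) :
    (∀ j ∉ I, wmap z j = 1 / Real.sqrt k) ∧
    (∃ i ∈ I, wmap z i ≤ -(1 / Real.sqrt k)) ∧
    (∀ u : Fin k → ℝ, ‖u - wmap z‖ < 1 / (2 * Real.sqrt k) →
      ∀ m : Fin k, (∀ ℓ : Fin k, u m ≤ u ℓ) → m ∈ I) := by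
  have hs : 0 < Real.sqrt k := Real.sqrt_pos.2 (by exact_mod_cast hk)
  have ha : ∀ j ∉ I, wmap z j = 1 / Real.sqrt k := fun j hj => by simp [wmap, hzero j hj]
  have hb : ∃ i ∈ I, wmap z i ≤ -(1 / Real.sqrt k) := by
    obtain ⟨i, hi, h⟩ := exists_one_le_mul_sum hI hz hpos hzero
    refine ⟨i, hi, ?_⟩
    rw [wmap, ← neg_div]
    gcongr
    linarith
  refine ⟨ha, hb, fun u hu m hm => ?_⟩
  by_contra hmI
  obtain ⟨i, -, hi⟩ := hb
  have hclose (j : Fin k) : |u j - wmap z j| < 1 / (2 * Real.sqrt k) :=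
    (norm_le_pi_norm (u - wmap z) j).trans_lt hu
  have hhalf : 1 / (2 * Real.sqrt k) = 1 / Real.sqrt k / 2 := by
    field_simp
  have hpos' : 0 < 1 / Real.sqrt k := by positivity
  have h₁ := abs_lt.1 (hclose m)
  have h₂ := abs_lt.1 (hclose i)
  linarith [ha m hmI, hm i, h₁.1, h₂.2]

end
end

section
/- Let k ≥ 1, let v ∈ ℝ, and let f_p := (0, v, v, ..., v)/√k ∈ ℝ^{k+1}. For every z ∈ ℝ^k, writing x := SP⁻¹(z), it holds for each i ∈ {1,...,k} that ⟨f_p, b_i(x)⟩ = (v/√k) · (1 − (2 z_i/(1 + ‖z‖₂²)) · Σ_{j=1}^k z_j). -/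
open Finset

noncomputable section

lemma tb_SPinv_succ {k : ℕ} (z : Fin k → ℝ) (i j : Fin k) :
    tb (SPinv z) i j.succ
      = (if j = i then 1 else 0) - 2 * z i / (1 + ∑ l, z l ^ 2) * z j := by
  have hS : (1 + ∑ l, z l ^ 2) ≠ 0 := by positivity
  simp only [tb, SPinv, Fin.succ_ne_zero, if_false, Fin.succ_inj, Fin.cons_succ,
    Fin.cons_zero, sub_sub_cancel]
  split_ifs with h
  · subst h
    field_simp
  · field_simp
    ring

/-- For `f_p := (0, v, …, v)/√k` and `x := SP⁻¹(z)`, for each `i ∈ {1, …, k}`: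
`⟨f_p, bᵢ(x)⟩ = (v/√k) · (1 − (2 zᵢ / (1 + ‖z‖₂²)) · Σⱼ zⱼ)`. -/
theorem pole_field_in_basis (k : ℕ) (hk : 1 ≤ k) (v : ℝ)
    (z : Fin k → ℝ) (i : Fin k) :
    dotp (fun j : Fin (k + 1) => if j = 0 then 0 else v / Real.sqrt k)
        (tb (SPinv z) i)
      = v / Real.sqrt k *
          (1 - 2 * z i / (1 + ∑ j, z j ^ 2) * ∑ j, z j) := by
  simp only [dotp, Fin.sum_univ_succ, if_true, zero_mul, zero_add, Fin.succ_ne_zero, if_false,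
    tb_SPinv_succ]
  rw [← Finset.mul_sum, Finset.sum_sub_distrib, ← Finset.mul_sum]
  simp

end
end

section
/- For every k ≥ 1 and every i ∈ {1,...,k}, the map ℝ^k → ℝ^{k+1}, z ↦ b_i(SP⁻¹(z)) is Lipschitz-continuous with Lipschitz constant 20√k when both ℝ^k and ℝ^{k+1} are equipped with the ℓ∞-norm. -/
open Finset

noncomputable section

/-- Difference of reciprocals of `1 + r ^ 2`. -/
lemma abs_one_div_one_add_sq_sub_le {r r' d : ℝ} (hr : 0 ≤ r) (hr' : 0 ≤ r')
    (h : |r - r'| ≤ d) :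
    |1 / (1 + r ^ 2) - 1 / (1 + r' ^ 2)| ≤ d * ((r + r') / ((1 + r ^ 2) * (1 + r' ^ 2))) := by
  have e : 1 / (1 + r ^ 2) - 1 / (1 + r' ^ 2)
      = (r' - r) * ((r + r') / ((1 + r ^ 2) * (1 + r' ^ 2))) := by
    field_simp
    ring
  rw [e, abs_mul, abs_sub_comm, abs_of_nonneg (a := (r + r') / _) (by positivity)]
  gcongr

lemma abs_div_one_add_sq_sub_le {a a' r r' d : ℝ} (hr : 0 ≤ r) (hr' : 0 ≤ r')
    (ha' : |a'| ≤ r') (had : |a - a'| ≤ d) (h : |r - r'| ≤ d) :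
    |a / (1 + r ^ 2) - a' / (1 + r' ^ 2)| ≤ 3 * d := by
  have hd : 0 ≤ d := (abs_nonneg _).trans h
  have e : a / (1 + r ^ 2) - a' / (1 + r' ^ 2)
      = (a - a') * (1 / (1 + r ^ 2)) + a' * (1 / (1 + r ^ 2) - 1 / (1 + r' ^ 2)) := by ring
  have h1 : |(a - a') * (1 / (1 + r ^ 2))| ≤ d * 1 := by
    rw [abs_mul, abs_of_nonneg (a := 1 / (1 + r ^ 2)) (by positivity)]
    gcongr
    rw [div_le_one (by positivity)]
    nlinarith
  have h2 : |a' * (1 / (1 + r ^ 2) - 1 / (1 + r' ^ 2))| ≤ 2 * d := by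
    rw [abs_mul]
    calc _ ≤ r' * (d * ((r + r') / ((1 + r ^ 2) * (1 + r' ^ 2)))) := by
          gcongr
          exact abs_one_div_one_add_sq_sub_le hr hr' h
      _ = d * (r' * (r + r') / ((1 + r ^ 2) * (1 + r' ^ 2))) := by ring
      _ ≤ d * 2 := by
          gcongr
          rw [div_le_iff₀ (by positivity)]
          nlinarith [sq_nonneg (r - r'), sq_nonneg (r * r')]
      _ = 2 * d := by ring
  rw [e]
  linarith [abs_add_le ((a - a') * (1 / (1 + r ^ 2)))
    (a' * (1 / (1 + r ^ 2) - 1 / (1 + r' ^ 2)))]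

lemma abs_mul_div_one_add_sq_sub_le {a a' b b' r r' d : ℝ} (hr : 0 ≤ r) (hr' : 0 ≤ r')
    (ha' : |a'| ≤ r') (hb : |b| ≤ r) (had : |a - a'| ≤ d) (hbd : |b - b'| ≤ d)
    (h : |r - r'| ≤ d) :
    |a * b / (1 + r ^ 2) - a' * b' / (1 + r' ^ 2)| ≤ 3 * d := by
  have hd : 0 ≤ d := (abs_nonneg _).trans h
  have e : a * b / (1 + r ^ 2) - a' * b' / (1 + r' ^ 2)
      = (a - a') * (b / (1 + r ^ 2)) + (b - b') * (a' / (1 + r' ^ 2))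
        + a' * b * (1 / (1 + r ^ 2) - 1 / (1 + r' ^ 2)) := by ring
  have key {x y t : ℝ} (hy : |y| ≤ t) (hx : |x| ≤ d) : |x * (y / (1 + t ^ 2))| ≤ d * 1 := by
    rw [abs_mul, abs_div, abs_of_nonneg (a := 1 + t ^ 2) (by positivity)]
    gcongr
    rw [div_le_one (by positivity)]
    nlinarith [sq_nonneg (t - 1)]
  have h3 : |a' * b * (1 / (1 + r ^ 2) - 1 / (1 + r' ^ 2))| ≤ d * 1 := by
    rw [abs_mul, abs_mul]
    calc _ ≤ r' * r * (d * ((r + r') / ((1 + r ^ 2) * (1 + r' ^ 2)))) := by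
          gcongr
          exact abs_one_div_one_add_sq_sub_le hr hr' h
      _ = d * (r' * r * (r + r') / ((1 + r ^ 2) * (1 + r' ^ 2))) := by ring
      _ ≤ d * 1 := by
          gcongr
          rw [div_le_one (by positivity)]
          nlinarith [mul_nonneg (sq_nonneg (r - 1)) (sq_nonneg r'),
            mul_nonneg (sq_nonneg (r' - 1)) (sq_nonneg r), sq_nonneg r, sq_nonneg r']
  rw [e]
  linarith [abs_add_three ((a - a') * (b / (1 + r ^ 2))) ((b - b') * (a' / (1 + r' ^ 2)))
    (a' * b * (1 / (1 + r ^ 2) - 1 / (1 + r' ^ 2))), key hb had, key ha' hbd]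

lemma one_sub_SPinv_zero {k : ℕ} (z : Fin k → ℝ) :
    1 - SPinv z 0 = 2 / (1 + ∑ j, z j ^ 2) := by
  simp [SPinv]

lemma SPinv_succ {k : ℕ} (z : Fin k → ℝ) (i : Fin k) :
    SPinv z i.succ = 2 * (z i / (1 + ∑ j, z j ^ 2)) := by
  simp only [SPinv, Fin.cons_succ]
  ring

lemma SPinv_succ_mul_div {k : ℕ} (z : Fin k → ℝ) (i j : Fin k) :
    SPinv z j.succ * SPinv z i.succ / (1 - SPinv z 0)
      = 2 * (z j * z i / (1 + ∑ l, z l ^ 2)) := by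
  have hs : 0 < 1 + ∑ l, z l ^ 2 := by positivity
  rw [SPinv_succ, SPinv_succ, one_sub_SPinv_zero]
  field_simp

lemma norm_toLp_two_le_sqrt_mul {k : ℕ} (z : Fin k → ℝ) :
    ‖WithLp.toLp 2 z‖ ≤ √k * ‖z‖ := by
  rw [EuclideanSpace.norm_eq]
  apply Real.sqrt_le_iff.2 ⟨by positivity, ?_⟩
  rw [mul_pow, Real.sq_sqrt (by positivity)]
  calc _ ≤ ∑ _j : Fin k, ‖z‖ ^ 2 := by
        gcongr with j
        exact norm_le_pi_norm z j
    _ = _ := by simp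

/-- For every `i ∈ {1, …, k}`, the map `z ↦ bᵢ(SP⁻¹(z))` is `20√k`-Lipschitz
w.r.t. the ℓ∞-norms (the default norm on `Fin n → ℝ`). -/
theorem basis_field_lipschitz (k : ℕ) (hk : 1 ≤ k) (i : Fin k)
    (z z' : Fin k → ℝ) :
    ‖tb (SPinv z) i - tb (SPinv z') i‖ ≤ 20 * Real.sqrt k * ‖z - z'‖ := by
  set r := ‖WithLp.toLp 2 z‖
  set r' := ‖WithLp.toLp 2 z'‖
  set d := ‖WithLp.toLp 2 (z - z')‖
  have hr : ∑ j, z j ^ 2 = r ^ 2 := by simp [r, EuclideanSpace.norm_sq_eq]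
  have hr' : ∑ j, z' j ^ 2 = r' ^ 2 := by simp [r', EuclideanSpace.norm_sq_eq]
  have hr0 : 0 ≤ r := norm_nonneg _
  have hr0' : 0 ≤ r' := norm_nonneg _
  have hz (j) : |z j| ≤ r := PiLp.norm_apply_le (WithLp.toLp 2 z) j
  have hz' (j) : |z' j| ≤ r' := PiLp.norm_apply_le (WithLp.toLp 2 z') j
  have hzd (j) : |z j - z' j| ≤ d := PiLp.norm_apply_le (WithLp.toLp 2 (z - z')) j
  have hrd : |r - r'| ≤ d := abs_norm_sub_norm_le (WithLp.toLp 2 z) (WithLp.toLp 2 z')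
  have hd : d ≤ √k * ‖z - z'‖ := norm_toLp_two_le_sqrt_mul _
  have hd0 : 0 ≤ d := norm_nonneg _
  have hprod (j : Fin k) := abs_le.1 (abs_mul_div_one_add_sq_sub_le hr0 hr0' (hz' j) (hz i)
    (hzd j) (hzd i) hrd)
  refine (pi_norm_le_iff_of_nonneg (by positivity)).2 fun j => ?_
  rw [Pi.sub_apply, Real.norm_eq_abs, abs_le]
  induction j using Fin.cases with
  | zero =>
    have := abs_le.1 (abs_div_one_add_sq_sub_le hr0 hr0' (hz' i) (hzd i) hrd)
    simp only [tb, if_true, SPinv_succ, hr, hr']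
    constructor <;> linarith
  | succ j =>
    by_cases hj : j = i
    · subst hj
      simp only [tb, Fin.succ_ne_zero, if_false, if_true, sq (SPinv _ _), SPinv_succ_mul_div,
        hr, hr']
      constructor <;> linarith [hprod j]
    · simp only [tb, Fin.succ_ne_zero, Fin.succ_inj, hj, if_false, neg_mul, neg_div,
        SPinv_succ_mul_div, hr, hr']
      constructor <;> linarith [hprod j]

end
end

section
/- Let k ≥ 2 and let u^(1), ..., u^(k), w^(1), ..., w^(k) ∈ ℝ^k satisfy: ‖u^(i) − u^(j)‖∞ ≤ 1/(4√k) for all i, j; ‖u^(i) − w^(i)‖∞ ≤ 1/(4√k) for all i; ‖w^(i)‖₂ = 1 for all i; and for each i ∈ {1,...,k}, the i-th coordinate of u^(i) is < 0 and satisfies u^(i)_i ≤ u^(i)_ℓ for all ℓ ∈ {1,...,k}. Then w^(i)_ℓ ≤ 0 for all i, ℓ ∈ {1,...,k}. -/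
open Finset

noncomputable section

/-- If `u¹, …, u^k` are pairwise within `1/(4√k)` (ℓ∞), each `uⁱ` is within `1/(4√k)`
of a unit (ℓ₂) vector `wⁱ`, and the `i`-th coordinate of `uⁱ` is negative and minimal
among its coordinates, then all coordinates of all `wⁱ` are nonpositive. -/
theorem door_facet_nonpos (k : ℕ) (hk : 2 ≤ k)
    (u w : Fin k → (Fin k → ℝ))
    (huu : ∀ i j : Fin k, ‖u i - u j‖ ≤ 1 / (4 * Real.sqrt k))
    (huw : ∀ i : Fin k, ‖u i - w i‖ ≤ 1 / (4 * Real.sqrt k))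
    (hw : ∀ i : Fin k, l2 (w i) = 1)
    (hneg : ∀ i : Fin k, u i i < 0)
    (hmin : ∀ i ℓ : Fin k, u i i ≤ u i ℓ) :
    ∀ i ℓ : Fin k, w i ℓ ≤ 0 := by
  intro i ℓ
  by_contra! hpos
  set ε : ℝ := 1 / (4 * Real.sqrt k) with hε
  have hk0 : (0 : ℝ) < k := by exact_mod_cast (by omega : 0 < k)
  have hεsq : k * ε ^ 2 = 1 / 16 := by
    rw [hε, div_pow, mul_pow, Real.sq_sqrt hk0.le]
    field_simp
    norm_num
  have huu_coord (a b m : Fin k) : |u a m - u b m| ≤ ε :=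
    (norm_le_pi_norm (u a - u b) m).trans (huu a b)
  have huw_coord (a m : Fin k) : |u a m - w a m| ≤ ε :=
    (norm_le_pi_norm (u a - w a) m).trans (huw a)
  have hbound (m : Fin k) : w ℓ m ^ 2 ≤ 9 * ε ^ 2 := by
    have h₁ := abs_le.mp (huw_coord i ℓ)
    have h₂ := abs_le.mp (huu_coord i ℓ ℓ)
    have h₃ := abs_le.mp (huw_coord ℓ m)
    have h₄ := abs_le.mp (huu_coord ℓ m m)
    have h₅ := hneg m
    have h₆ := hmin ℓ m
    have hlow : -(3 * ε) ≤ w ℓ m := by linarith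
    have hup : w ℓ m ≤ 3 * ε := by linarith
    nlinarith
  have hsum : ∑ m, w ℓ m ^ 2 = 1 := Real.sqrt_eq_one.mp (hw ℓ)
  have hle : ∑ m, w ℓ m ^ 2 ≤ k * (9 * ε ^ 2) := by
    simpa using Finset.sum_le_sum fun m (_ : m ∈ Finset.univ) => hbound m
  linarith

end
end

section
/- For every k ≥ 1 and every x ∈ S^k, the vectors b̂_1(x), ..., b̂_k(x) are tangent to S^k at x, pairwise orthogonal, and each has ℓ₂-norm 1 − x_0: ⟨b̂_i(x), x⟩ = 0 for all i, ⟨b̂_i(x), b̂_j(x)⟩ = 0 for all i ≠ j, and ‖b̂_i(x)‖₂ = 1 − x_0 for all i. Consequently, for every v ∈ ℝ^k, ‖Σ_{i=1}^k v_i b̂_i(x)‖₂ = (1 − x_0) ‖v‖₂. -/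
open Finset

noncomputable section

/-- The non-normalised tangent vector `b̂_i(x)`: `[b̂_i(x)]₀ = x_i (1 − x₀)`,
`[b̂_i(x)]_i = 1 − x₀ − x_i²`, and `[b̂_i(x)]_j = −x_j x_i` otherwise. -/
def tbhat {k : ℕ} (x : Fin (k + 1) → ℝ) (i : Fin k) : Fin (k + 1) → ℝ := fun j =>
  if j = 0 then x i.succ * (1 - x 0)
  else if j = i.succ then 1 - x 0 - (x i.succ) ^ 2
  else -(x j) * x i.succ

theorem tbhat_zero {k : ℕ} (x : Fin (k + 1) → ℝ) (i : Fin k) :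
    tbhat x i 0 = x i.succ * (1 - x 0) := by
  simp [tbhat]

theorem tbhat_succ {k : ℕ} (x : Fin (k + 1) → ℝ) (i j : Fin k) :
    tbhat x i j.succ = (if j = i then 1 - x 0 else 0) - x i.succ * x j.succ := by
  by_cases h : j = i
  · subst h
    simp [tbhat, Fin.succ_ne_zero]
    ring
  · simp [tbhat, Fin.succ_ne_zero, h]
    ring

theorem dotp_tbhat_left {k : ℕ} (x y : Fin (k + 1) → ℝ) (i : Fin k) :
    dotp (tbhat x i) y =
      x i.succ * (1 - x 0) * y 0 + (1 - x 0) * y i.succ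
        - x i.succ * ∑ j : Fin k, x j.succ * y j.succ := by
  simp only [dotp, Fin.sum_univ_succ, tbhat_zero, tbhat_succ, sub_mul, sum_sub_distrib,
    ite_mul, zero_mul, sum_ite_eq', mem_univ, if_true, mul_sum, mul_assoc]
  ring

theorem sum_sq_of_mem_unitSphere {k : ℕ} {x : Fin (k + 1) → ℝ} (hx : x ∈ unitSphere k) :
    ∑ i, x i ^ 2 = 1 :=
  Real.sqrt_eq_one.mp hx

theorem sum_succ_mul_self_of_mem_unitSphere {k : ℕ} {x : Fin (k + 1) → ℝ}
    (hx : x ∈ unitSphere k) : ∑ j : Fin k, x j.succ * x j.succ = 1 - x 0 ^ 2 := by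
  have h := sum_sq_of_mem_unitSphere hx
  rw [Fin.sum_univ_succ] at h
  simp only [← sq]
  linarith

theorem zero_coord_le_one_of_mem_unitSphere {k : ℕ} {x : Fin (k + 1) → ℝ}
    (hx : x ∈ unitSphere k) : x 0 ≤ 1 := by
  have h := single_le_sum (f := fun i => x i ^ 2) (fun i _ => sq_nonneg (x i)) (mem_univ 0)
  simp only [sum_sq_of_mem_unitSphere hx] at h
  exact le_of_abs_le (sq_le_one_iff_abs_le_one _ |>.mp h)

theorem dotp_tbhat_self_point {k : ℕ} {x : Fin (k + 1) → ℝ} (hx : x ∈ unitSphere k)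
    (i : Fin k) : dotp (tbhat x i) x = 0 := by
  rw [dotp_tbhat_left, sum_succ_mul_self_of_mem_unitSphere hx]
  ring

theorem dotp_tbhat_tbhat {k : ℕ} {x : Fin (k + 1) → ℝ} (hx : x ∈ unitSphere k)
    (i j : Fin k) :
    dotp (tbhat x i) (tbhat x j) = if i = j then (1 - x 0) ^ 2 else 0 := by
  have h : ∑ m : Fin k, x m.succ * tbhat x j m.succ = -(x j.succ * (1 - x 0) * x 0) := by
    have h0 := dotp_tbhat_self_point hx j
    have hcomm : ∑ m : Fin k, x m.succ * tbhat x j m.succ =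
        ∑ m : Fin k, tbhat x j m.succ * x m.succ := by simp only [mul_comm]
    rw [dotp, Fin.sum_univ_succ, tbhat_zero] at h0
    linarith
  rw [dotp_tbhat_left, h, tbhat_zero, tbhat_succ]
  split_ifs <;> ring

theorem l2_eq_sqrt_dotp {n : ℕ} (x : Fin n → ℝ) : l2 x = Real.sqrt (dotp x x) := by
  simp only [l2, dotp, sq]

theorem dotp_sum_smul_self {k n : ℕ} (v : Fin k → ℝ) (b : Fin k → Fin n → ℝ) :
    dotp (∑ i, v i • b i) (∑ i, v i • b i) = ∑ i, ∑ j, v i * v j * dotp (b i) (b j) := by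
  simp only [dotp, Finset.sum_apply, Pi.smul_apply, smul_eq_mul, sum_mul_sum]
  simp only [mul_sum]
  rw [sum_comm]
  refine sum_congr rfl fun i _ => ?_
  rw [sum_comm]
  refine sum_congr rfl fun j _ => sum_congr rfl fun m _ => ?_
  ring

/-- For `x ∈ S^k`, the `b̂ᵢ(x)` are tangent at `x`, pairwise orthogonal, each of
ℓ₂-norm `1 − x₀`; consequently `‖Σᵢ vᵢ b̂ᵢ(x)‖₂ = (1 − x₀) ‖v‖₂` for every `v ∈ ℝ^k`. -/
theorem tbhat_orthogonal (k : ℕ) (hk : 1 ≤ k)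
    (x : Fin (k + 1) → ℝ) (hx : x ∈ unitSphere k) :
    (∀ i : Fin k, dotp (tbhat x i) x = 0) ∧
    (∀ i j : Fin k, i ≠ j → dotp (tbhat x i) (tbhat x j) = 0) ∧
    (∀ i : Fin k, l2 (tbhat x i) = 1 - x 0) ∧
    (∀ v : Fin k → ℝ, l2 (∑ i : Fin k, v i • tbhat x i) = (1 - x 0) * l2 v) := by
  have h0 : 0 ≤ 1 - x 0 := sub_nonneg.mpr (zero_coord_le_one_of_mem_unitSphere hx)
  refine ⟨dotp_tbhat_self_point hx, fun i j hij => ?_, fun i => ?_, fun v => ?_⟩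
  · rw [dotp_tbhat_tbhat hx, if_neg hij]
  · rw [l2_eq_sqrt_dotp, dotp_tbhat_tbhat hx, if_pos rfl, Real.sqrt_sq h0]
  · have h : ∑ i, ∑ j, v i * v j * dotp (tbhat x i) (tbhat x j) =
        (1 - x 0) ^ 2 * ∑ i, v i ^ 2 := by
      simp only [dotp_tbhat_tbhat hx, mul_ite, mul_zero, sum_ite_eq, mem_univ, if_true, mul_sum]
      exact sum_congr rfl fun i _ => by ring
    rw [l2_eq_sqrt_dotp, dotp_sum_smul_self, h, Real.sqrt_mul (sq_nonneg _), Real.sqrt_sq h0, l2]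

end
end

section
/- Let k ≥ 2 be even and let Ĝ : B_k → ℝ^k be continuous with Ĝ(z) = −z whenever ‖z‖₂ ≥ 1/2, where B_k := {z ∈ ℝ^k : ‖z‖₂ ≤ 1}. Define F : S^k → ℝ^{k+1} as follows: for x = (x_0, x_1, ..., x_k) ∈ S^k, let x' := (x_1, ..., x_k), v := Ĝ(x'), α := max{0, min{1, 1/2 − x_0}}, and F(x) := α · Σ_{i=1}^k v_i b̂_i(x) + (1 − α) · Σ_{i=1}^k (−v_i) b̂_i(−x). Then F is continuous, ⟨F(x), x⟩ = 0 for every x ∈ S^k, and every zero of F yields a zero of Ĝ: if F(x) = 0 then Ĝ(x') = 0 (moreover, in that case |x_0| ≥ 1/2). -/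
open Finset

noncomputable section

/-- The closed unit ball `B_k` in `ℝ^k`. -/
def unitBall (k : ℕ) : Set (Fin k → ℝ) := {z | l2 z ≤ 1}

lemma continuous_tbhat {k : ℕ} (i : Fin k) : Continuous fun x : Fin (k + 1) → ℝ => tbhat x i := by
  refine continuous_pi fun j => ?_
  unfold tbhat
  split_ifs <;> fun_prop

lemma sum_smul_tbhat_zero {k : ℕ} (v : Fin k → ℝ) (x : Fin (k + 1) → ℝ) :
    (∑ i, v i • tbhat x i) 0 = (1 - x 0) * ∑ i, v i * x i.succ := by
  simp only [Finset.sum_apply, Pi.smul_apply, smul_eq_mul, tbhat, if_true, Finset.mul_sum]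
  exact Finset.sum_congr rfl fun i _ => by ring

lemma sum_smul_tbhat_succ {k : ℕ} (v : Fin k → ℝ) (x : Fin (k + 1) → ℝ) (j : Fin k) :
    (∑ i, v i • tbhat x i) j.succ
      = (1 - x 0) * v j - x j.succ * ∑ i, v i * x i.succ := by
  have h : ∀ i, v i * tbhat x i j.succ
      = (if j = i then (1 - x 0) * v i else 0) - x j.succ * (v i * x i.succ) := by
    intro i
    by_cases hij : j = i
    · subst hij
      simp only [tbhat, Fin.succ_ne_zero, if_false, if_true]
      ring
    · simp only [tbhat, Fin.succ_ne_zero, Fin.succ_inj, hij, if_false]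
      ring
  simp only [Finset.sum_apply, Pi.smul_apply, smul_eq_mul, h, Finset.sum_sub_distrib,
    Finset.sum_ite_eq, Finset.mem_univ, if_true, Finset.mul_sum]

lemma sq_add_sum_sq_of_mem_unitSphere {k : ℕ} {x : Fin (k + 1) → ℝ} (hx : x ∈ unitSphere k) :
    x 0 ^ 2 + ∑ i : Fin k, x i.succ ^ 2 = 1 := by
  have h : Real.sqrt (∑ i, x i ^ 2) = 1 := hx
  rwa [Real.sqrt_eq_one, Fin.sum_univ_succ] at h

lemma tail_mem_unitBall {k : ℕ} {x : Fin (k + 1) → ℝ} (hx : x ∈ unitSphere k) :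
    (fun m : Fin k => x m.succ) ∈ unitBall k := by
  have h := sq_add_sum_sq_of_mem_unitSphere hx
  exact Real.sqrt_le_one.mpr (by nlinarith [sq_nonneg (x 0)])

/-- The combination `Σᵢ vᵢ b̂ᵢ(x)` is tangent to the sphere at `x`. -/
lemma dotp_sum_smul_tbhat {k : ℕ} (v : Fin k → ℝ) {x : Fin (k + 1) → ℝ}
    (hx : x ∈ unitSphere k) : dotp (∑ i, v i • tbhat x i) x = 0 := by
  have h := sq_add_sum_sq_of_mem_unitSphere hx
  unfold dotp
  rw [Fin.sum_univ_succ, sum_smul_tbhat_zero]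
  simp only [sum_smul_tbhat_succ]
  set s := ∑ i, v i * x i.succ with hs
  have hsum : ∑ j : Fin k, ((1 - x 0) * v j - x j.succ * s) * x j.succ
      = (1 - x 0) * s - s * ∑ j : Fin k, x j.succ ^ 2 := by
    rw [hs, Finset.mul_sum, ← hs, Finset.mul_sum, ← Finset.sum_sub_distrib]
    exact Finset.sum_congr rfl fun j _ => by ring
  rw [hsum]
  linear_combination (-s) * h

lemma neg_mem_unitSphere {k : ℕ} {x : Fin (k + 1) → ℝ} (hx : x ∈ unitSphere k) :
    -x ∈ unitSphere k := by
  simpa [unitSphere, l2] using hx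

lemma dotp_smul_add_smul {n : ℕ} (a b : ℝ) (y z x : Fin n → ℝ) :
    dotp (a • y + b • z) x = a * dotp y x - b * dotp z (-x) := by
  simp only [dotp, Finset.mul_sum, ← Finset.sum_sub_distrib]
  exact Finset.sum_congr rfl fun i _ => by simp; ring

/-- Gluing two copies of a Brouwer-type field into a Hairy Ball field: given
continuous `Ĝ : B_k → ℝ^k` with `Ĝ(z) = −z` for `‖z‖₂ ≥ 1/2`, the field
`F(x) = α Σᵢ vᵢ b̂ᵢ(x) + (1 − α) Σᵢ (−vᵢ) b̂ᵢ(−x)` (with `x' = (x₁, …, x_k)`,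
`v = Ĝ(x')`, `α = max{0, min{1, 1/2 − x₀}}`) is a continuous tangent vector field
on `S^k`, and every zero `x` of `F` satisfies `Ĝ(x') = 0` and `|x₀| ≥ 1/2`. -/
theorem glued_field_zeros (k : ℕ) (hk : 2 ≤ k) (hkeven : Even k)
    (G : (Fin k → ℝ) → (Fin k → ℝ))
    (hGcont : ContinuousOn G (unitBall k))
    (hGout : ∀ z ∈ unitBall k, 1 / 2 ≤ l2 z → G z = -z)
    (F : (Fin (k + 1) → ℝ) → (Fin (k + 1) → ℝ))
    (hF : ∀ x : Fin (k + 1) → ℝ,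
      F x = max 0 (min 1 (1 / 2 - x 0)) •
              (∑ i : Fin k, G (fun m => x m.succ) i • tbhat x i)
          + (1 - max 0 (min 1 (1 / 2 - x 0))) •
              (∑ i : Fin k, (-(G (fun m => x m.succ) i)) • tbhat (-x) i)) :
    ContinuousOn F (unitSphere k) ∧
    (∀ x ∈ unitSphere k, dotp (F x) x = 0) ∧
    (∀ x ∈ unitSphere k, F x = 0 →
      G (fun m => x m.succ) = 0 ∧ 1 / 2 ≤ |x 0|) := by
  refine ⟨?_, ?_, ?_⟩
  · have hG : ContinuousOn (fun x : Fin (k + 1) → ℝ => G fun m => x m.succ) (unitSphere k) :=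
      hGcont.comp (by fun_prop) fun x hx => tail_mem_unitBall hx
    have hGi := continuousOn_pi.mp hG
    have hα : ContinuousOn (fun x : Fin (k + 1) → ℝ => max 0 (min 1 (1 / 2 - x 0)))
        (unitSphere k) := by fun_prop
    rw [funext hF]
    refine (hα.smul ?_).add ((continuousOn_const.sub hα).smul ?_)
    · exact continuousOn_finsetSum _ fun i _ => (hGi i).smul (continuous_tbhat i).continuousOn
    · exact continuousOn_finsetSum _ fun i _ =>
        (hGi i).neg.smul ((continuous_tbhat i).comp continuous_neg).continuousOn
  · intro x hx
    rw [hF, dotp_smul_add_smul, dotp_sum_smul_tbhat _ hx,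
      dotp_sum_smul_tbhat (fun i => -G (fun m => x m.succ) i) (neg_mem_unitSphere hx)]
    ring
  · intro x hx hzero
    have hsq := sq_add_sum_sq_of_mem_unitSphere hx
    set v := G (fun m => x m.succ) with hv
    set α := max 0 (min 1 (1 / 2 - x 0)) with hα
    set s := ∑ i, v i * x i.succ with hs
    have hs' : ∑ i, -v i * (-x) i.succ = s := by
      rw [hs]; exact Finset.sum_congr rfl fun i _ => by simp
    have hF0 : s * (α * (1 - x 0) + (1 - α) * (1 + x 0)) = 0 := by
      have h := congrFun ((hF x).symm.trans hzero) 0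
      simp only [Pi.add_apply, Pi.smul_apply, smul_eq_mul, Pi.zero_apply] at h
      rw [← hv, ← hα, sum_smul_tbhat_zero, sum_smul_tbhat_zero (fun i => -v i), hs', ← hs,
        Pi.neg_apply] at h
      linear_combination h
    have hFsucc : ∀ j : Fin k, v j * (α * (1 - x 0) - (1 - α) * (1 + x 0))
        + x j.succ * s * (1 - 2 * α) = 0 := by
      intro j
      have h := congrFun ((hF x).symm.trans hzero) j.succ
      simp only [Pi.add_apply, Pi.smul_apply, smul_eq_mul, Pi.zero_apply] at h
      rw [← hv, ← hα, sum_smul_tbhat_succ, sum_smul_tbhat_succ (fun i => -v i), hs', ← hs,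
        Pi.neg_apply, Pi.neg_apply] at h
      linear_combination h
    have habs : 1 / 2 ≤ |x 0| := by
      by_contra! hlt
      obtain ⟨hlo, hhi⟩ := abs_lt.mp hlt
      have hvx : v = -fun m => x m.succ :=
        hGout _ (tail_mem_unitBall hx) (Real.le_sqrt_of_sq_le (by nlinarith))
      have hsneg : s = -∑ i : Fin k, x i.succ ^ 2 := by
        rw [hs, hvx, ← Finset.sum_neg_distrib]
        exact Finset.sum_congr rfl fun i _ => by simp; ring
      have hα0 : 0 ≤ α := le_max_left _ _
      have hα1 : α ≤ 1 := max_le zero_le_one (min_le_left _ _)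
      rcases mul_eq_zero.mp hF0 with h | h <;> nlinarith
    refine ⟨?_, habs⟩
    rcases le_abs.mp habs with h | h
    · have hα0 : α = 0 := max_eq_left ((min_le_right _ _).trans (by linarith))
      rw [hα0] at hF0 hFsucc
      have hs0 : s = 0 := (mul_eq_zero.mp hF0).resolve_right (by linarith)
      funext j
      have hj := hFsucc j
      rw [hs0] at hj
      exact (mul_eq_zero.mp (by linarith : v j * (1 + x 0) = 0)).resolve_right (by linarith)
    · have hα1 : α = 1 := by
        rw [hα, min_eq_left (by linarith), max_eq_right zero_le_one]
      rw [hα1] at hF0 hFsucc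
      have hs0 : s = 0 := (mul_eq_zero.mp hF0).resolve_right (by linarith)
      funext j
      have hj := hFsucc j
      rw [hs0] at hj
      exact (mul_eq_zero.mp (by linarith : v j * (1 - x 0) = 0)).resolve_right (by linarith)

end
end

section
/- Totality of 2D-Variant-Brouwer: Let N ≥ 2 be an integer and let C : {1,...,N} × {1,...,N} → {(1,0), (−1,0), (0,1), (0,−1)} satisfy the boundary conditions C(1,a) = (1,0), C(N,b) = (−1,0), C(b,1) = (0,1), and C(a,N) = (0,−1) for all a ∈ {2,...,N} and all b ∈ {1,...,N−1}. Then there exist cells x, y ∈ {1,...,N} × {1,...,N} with ‖x − y‖∞ ≤ 1 and C(x) + C(y) = (0,0), i.e., two adjacent cells (adjacency including diagonal adjacency, or x = y is excluded automatically since no arrow is its own negative) carrying opposite arrows. -/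
open Finset

/-- The signed number of quarter turns between two non-opposite arrows. -/
def turn (u v : ℤ × ℤ) : ℤ := u.1 * v.2 - u.2 * v.1

/-- One of the four unit arrows. -/
def IsArrow (u : ℤ × ℤ) : Prop :=
  u = (1, 0) ∨ u = (-1, 0) ∨ u = (0, 1) ∨ u = (0, -1)

/-- The turns around a unit square cancel if no two of its arrows are opposite. -/
lemma turn_square {a b c d : ℤ × ℤ} (ha : IsArrow a) (hb : IsArrow b) (hc : IsArrow c)
    (hd : IsArrow d) (hab : a + b ≠ 0) (hac : a + c ≠ 0) (had : a + d ≠ 0) (hbc : b + c ≠ 0)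
    (hbd : b + d ≠ 0) (hcd : c + d ≠ 0) :
    turn c d - turn a b = turn b d - turn a c := by
  rcases ha with rfl | rfl | rfl | rfl <;> rcases hb with rfl | rfl | rfl | rfl <;>
    first
    | exact absurd (by decide) hab
    | (rcases hc with rfl | rfl | rfl | rfl <;>
        first
        | exact absurd (by decide) hac
        | exact absurd (by decide) hbc
        | (rcases hd with rfl | rfl | rfl | rfl <;>
            first
            | decide
            | exact absurd (by decide) had
            | exact absurd (by decide) hbd
            | exact absurd (by decide) hcd))

/-- Discrete Green's theorem on an `m × n` rectangle for a closed one-form. -/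
lemma sum_boundary_eq_of_closed (h v : ℕ → ℕ → ℤ) (m n : ℕ)
    (closed : ∀ i < m, ∀ j < n, h i (j + 1) - h i j = v (i + 1) j - v i j) :
    ∑ i ∈ range m, h i n - ∑ i ∈ range m, h i 0 =
      ∑ j ∈ range n, v m j - ∑ j ∈ range n, v 0 j := by
  rw [← sum_sub_distrib, ← sum_sub_distrib]
  calc ∑ i ∈ range m, (h i n - h i 0)
      = ∑ i ∈ range m, ∑ j ∈ range n, (h i (j + 1) - h i j) :=
        sum_congr rfl fun i _ => (sum_range_sub (h i) n).symm
    _ = ∑ i ∈ range m, ∑ j ∈ range n, (v (i + 1) j - v i j) :=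
        sum_congr rfl fun i hi => sum_congr rfl fun j hj =>
          closed i (mem_range.1 hi) j (mem_range.1 hj)
    _ = ∑ j ∈ range n, ∑ i ∈ range m, (v (i + 1) j - v i j) := sum_comm
    _ = ∑ j ∈ range n, (v m j - v 0 j) :=
        sum_congr rfl fun j _ => sum_range_sub (fun i => v i j) m

/-- The total turn along a path that is constant except for its last step. -/
lemma sum_turn_of_const_init (f : ℕ → ℤ × ℤ) (m : ℕ) (u : ℤ × ℤ)
    (hf : ∀ i ≤ m, f i = u) :
    ∑ i ∈ range (m + 1), turn (f i) (f (i + 1)) = turn u (f (m + 1)) := by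
  rw [sum_range_succ, sum_eq_zero, zero_add, hf m le_rfl]
  intro i hi
  have hi := mem_range.1 hi
  rw [hf i (by omega), hf (i + 1) (by omega), turn]
  ring

/-- The total turn along a path that is constant except for its first step. -/
lemma sum_turn_of_const_tail (f : ℕ → ℤ × ℤ) (m : ℕ) (u : ℤ × ℤ)
    (hf : ∀ i ≤ m, f (i + 1) = u) :
    ∑ i ∈ range (m + 1), turn (f i) (f (i + 1)) = turn (f 0) u := by
  rw [sum_range_succ', sum_eq_zero, zero_add, hf 0 (Nat.zero_le m)]
  intro i hi
  have hi := mem_range.1 hi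
  rw [hf i (by omega), hf (i + 1) (by omega), turn]
  ring

/-- Totality of 2D-Variant-Brouwer: a colouring of the `N × N` grid
(`N ≥ 2`) by the four arrows `(1,0), (−1,0), (0,1), (0,−1)` satisfying the
boundary conditions `C(1,a) = (1,0)`, `C(N,b) = (−1,0)`, `C(b,1) = (0,1)`,
`C(a,N) = (0,−1)` for `a ∈ {2,…,N}` and `b ∈ {1,…,N−1}` must contain two
adjacent cells (ℓ∞-distance at most 1, diagonal adjacency included) carrying
opposite arrows. -/
theorem variant_brouwer_total (N : ℕ) (hN : 2 ≤ N)
    (C : ℕ × ℕ → ℤ × ℤ)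
    (hrange : ∀ x : ℕ × ℕ, 1 ≤ x.1 → x.1 ≤ N → 1 ≤ x.2 → x.2 ≤ N →
      C x = (1, 0) ∨ C x = (-1, 0) ∨ C x = (0, 1) ∨ C x = (0, -1))
    (hleft : ∀ a : ℕ, 2 ≤ a → a ≤ N → C (1, a) = (1, 0))
    (hright : ∀ b : ℕ, 1 ≤ b → b ≤ N - 1 → C (N, b) = (-1, 0))
    (hbottom : ∀ b : ℕ, 1 ≤ b → b ≤ N - 1 → C (b, 1) = (0, 1))
    (htop : ∀ a : ℕ, 2 ≤ a → a ≤ N → C (a, N) = (0, -1)) :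
    ∃ x y : ℕ × ℕ,
      1 ≤ x.1 ∧ x.1 ≤ N ∧ 1 ≤ x.2 ∧ x.2 ≤ N ∧
      1 ≤ y.1 ∧ y.1 ≤ N ∧ 1 ≤ y.2 ∧ y.2 ≤ N ∧
      max |(x.1 : ℤ) - (y.1 : ℤ)| |(x.2 : ℤ) - (y.2 : ℤ)| ≤ 1 ∧
      C x + C y = 0 := by
  by_contra hno
  obtain ⟨m, rfl⟩ : ∃ m, N = m + 2 := ⟨N - 2, by omega⟩
  have hne : ∀ i j k l : ℕ, i ≤ m + 1 → j ≤ m + 1 → k ≤ m + 1 → l ≤ m + 1 →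
      i ≤ k + 1 → k ≤ i + 1 → j ≤ l + 1 → l ≤ j + 1 →
      C (i + 1, j + 1) + C (k + 1, l + 1) ≠ 0 := by
    intro i j k l hi hj hk hl hik hki hjl hlj h
    refine hno ⟨(i + 1, j + 1), (k + 1, l + 1), ?_, ?_, ?_, ?_, ?_, ?_, ?_, ?_, ?_, h⟩ <;>
      try (dsimp only; omega)
    refine max_le (abs_le.2 ?_) (abs_le.2 ?_) <;> push_cast <;> constructor <;> omega
  have harrow : ∀ i j : ℕ, i ≤ m + 1 → j ≤ m + 1 → IsArrow (C (i + 1, j + 1)) :=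
    fun i j hi hj => hrange (i + 1, j + 1) (by simp) (by simpa using hi) (by simp)
      (by simpa using hj)
  have green := sum_boundary_eq_of_closed
    (fun i j => turn (C (i + 1, j + 1)) (C (i + 1 + 1, j + 1)))
    (fun i j => turn (C (i + 1, j + 1)) (C (i + 1, j + 1 + 1))) (m + 1) (m + 1) (by
      intro i hi j hj
      apply turn_square <;> first | (apply harrow <;> omega) | (apply hne <;> omega))
  have bottom := sum_turn_of_const_init (fun i => C (i + 1, 1)) m (0, 1)
    fun i hi => hbottom _ (by omega) (by omega)
  have right := sum_turn_of_const_init (fun j => C (m + 2, j + 1)) m (-1, 0)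
    fun j hj => hright _ (by omega) (by omega)
  have top := sum_turn_of_const_tail (fun i => C (i + 1, m + 2)) m (0, -1)
    fun i hi => htop _ (by omega) (by omega)
  have left := sum_turn_of_const_tail (fun j => C (1, j + 1)) m (1, 0)
    fun j hj => hleft _ (by omega) (by omega)
  simp only [zero_add, add_assoc, Nat.reduceAdd] at green bottom right top left
  rw [bottom, right, top, left, hright 1 le_rfl (by omega), htop (m + 2) (by omega) le_rfl,
    hleft (m + 2) (by omega) le_rfl, hbottom 1 le_rfl (by omega)] at green
  simp [turn] at green
end
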